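/- Eigenfunctions of the fractional Laplacian on ℝⁿ (Proposition A.1, weak Fourier formulation): Let n ≥ 2 be an integer, s ∈ (0, n), k ≥ 0 an integer, α = (n−1)/2 and μ = (n−s)/2. Define the Gegenbauer polynomial P_k(z) := Σ_{j=0}^{⌊k/2⌋} (−1)^j Γ(α + k − j) / ( Γ(α) · j! · (k−2j)! ) · (2z)^{k−2j} and f_k(x) := P_k( (1−|x|²)/(1+|x|²) ) · (1+|x|²)^{−μ} for x ∈ ℝⁿ. Then for every Schwartz function φ on ℝⁿ, ∫_{ℝⁿ} f_k(x) · 𝓕^{−1}[ (2π|ξ|)^s 𝓕φ(ξ) ](x) dx = λ_k ∫_{ℝⁿ} f_k(x) (1+|x|²)^{−s} φ(x) dx, where λ_k = 2^s Γ(k + (n+s)/2) / Γ(k + (n−s)/2); both integrals converge absolutely. -/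

import Mathlib

open MeasureTheory Real SchwartzMap
open scoped FourierTransform

/-- The Gegenbauer polynomial `C_k^{(α)}` with parameter `α = (n−1)/2`, via its
explicit finite-sum formula. -/
noncomputable def gegenbauerP (n k : ℕ) (z : ℝ) : ℝ :=
  ∑ j ∈ Finset.range (k / 2 + 1),
    (-1 : ℝ) ^ j * Gamma (((n : ℝ) - 1) / 2 + (k : ℝ) - (j : ℝ)) /
        (Gamma (((n : ℝ) - 1) / 2) * (Nat.factorial j : ℝ) *
          (Nat.factorial (k - 2 * j) : ℝ)) *
      (2 * z) ^ (k - 2 * j)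

/-- The eigenfunction `f_k(x) = C_k^{(α)}((1−|x|²)/(1+|x|²)) (1+|x|²)^{−μ}` with
`μ = (n−s)/2`. -/
noncomputable def eigenFun (n k : ℕ) (s : ℝ) (x : EuclideanSpace ℝ (Fin n)) : ℝ :=
  gegenbauerP n k ((1 - ‖x‖ ^ 2) / (1 + ‖x‖ ^ 2)) *
    (1 + ‖x‖ ^ 2) ^ (-(((n : ℝ) - s) / 2))

/-!
Write `w = (1 + ‖x‖²)⁻¹`. Subordinating the powers of `w` to Gaussians turns the Fourier transform
of `w ^ a * P w` into a combination of Bessel integrals, so that the claim becomes, frequency by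
frequency, an identity between the radial profiles of the same polynomial at `a = (d - s) / 2` and
at `a = (d + s) / 2`. For `k = 0` it is the reflection formula `K_{-ν} = K_ν`. The generator of
dilations acts on both sides of the identity, and by the derivative formula for Gegenbauer
polynomials it shifts `k` through a three-term recurrence, which gives the induction step.

Integrability of `(-Δ)^(s/2) φ` comes from writing `‖ξ‖ ^ s` as a multiple of the Mellin integral
`∫ l ^ (-s - 1) * ψ (l * ‖ξ‖) dl` over `l > 0`, with `ψ r = r ^ (2 * m) * χ r` for a smooth cutoff
`χ` and `2 * m > s`: the Fourier multiplier `ψ (l * ‖ξ‖)` sends `φ` to a function of `L¹` norm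
`O (min 1 (l ^ (2 * m)))`.
-/

open Set Filter Asymptotics Topology

section BesselIntegral

/-- The integral `2 r^ν K_ν(2r)`, where `K_ν` is the modified Bessel function of the second kind. -/
noncomputable def besselIntegral (ν r : ℝ) : ℝ :=
  ∫ t in Ioi (0 : ℝ), t ^ (ν - 1) * exp (-t - r ^ 2 / t)

variable {ν r s : ℝ}

lemma exp_neg_sub_div_isBigO_atTop (c p : ℝ) (hc : 0 ≤ c) :
    (fun t : ℝ => exp (-t - c / t)) =O[atTop] (· ^ p) := by
  refine .trans (.of_bound 1 ?_) (isLittleO_exp_neg_mul_rpow_atTop one_pos p).isBigO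
  filter_upwards [eventually_gt_atTop 0] with t ht
  rw [norm_of_nonneg (exp_pos _).le, norm_of_nonneg (exp_pos _).le, one_mul, exp_le_exp]
  linarith [div_nonneg hc ht.le]

lemma exp_neg_sub_div_isBigO_nhdsGT_zero {c : ℝ} (hc : 0 < c) (p : ℝ) :
    (fun t : ℝ => exp (-t - c / t)) =O[𝓝[>] 0] (· ^ p) := by
  have hexp := ((isLittleO_exp_neg_mul_rpow_atTop hc (-p)).comp_tendsto
    tendsto_inv_nhdsGT_zero).isBigO
  refine (IsBigO.of_bound 1 ?_).trans (hexp.congr' .rfl ?_)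
  · filter_upwards [self_mem_nhdsWithin] with t ht
    rw [Function.comp_apply, norm_of_nonneg (exp_pos _).le, norm_of_nonneg (exp_pos _).le,
      one_mul, exp_le_exp, div_eq_mul_inv]
    linarith [mem_Ioi.1 ht]
  · filter_upwards [self_mem_nhdsWithin] with t ht
    simp only [Function.comp_apply, inv_rpow (mem_Ioi.1 ht).le, rpow_neg (mem_Ioi.1 ht).le, inv_inv]

lemma integrableOn_besselIntegrand (ν : ℝ) (hr : 0 < r) :
    IntegrableOn (fun t : ℝ => t ^ (ν - 1) * exp (-t - r ^ 2 / t)) (Ioi 0) := by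
  have hcont : ContinuousOn (fun t : ℝ => exp (-t - r ^ 2 / t)) (Ioi 0) := fun t ht =>
    ContinuousAt.continuousWithinAt (by fun_prop (disch := exact (mem_Ioi.1 ht).ne'))
  exact mellin_convergent_of_isBigO_scalar (hcont.locallyIntegrableOn measurableSet_Ioi)
    (exp_neg_sub_div_isBigO_atTop _ _ (sq_nonneg r)) (lt_add_one ν)
    (exp_neg_sub_div_isBigO_nhdsGT_zero (sq_pos_of_pos hr) _) (sub_one_lt ν)

lemma hasDerivAt_besselIntegral (ν : ℝ) (hr : 0 < r) :
    HasDerivAt (besselIntegral ν) (-2 * r * besselIntegral (ν - 1) r) r := by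
  have hmeas (ν r : ℝ) : AEStronglyMeasurable
      (fun t : ℝ => t ^ (ν - 1) * exp (-t - r ^ 2 / t)) (volume.restrict (Ioi 0)) := by
    fun_prop
  rw [besselIntegral, ← integral_const_mul]
  refine (hasDerivAt_integral_of_dominated_loc_of_deriv_le
    (F := fun r t => t ^ (ν - 1) * exp (-t - r ^ 2 / t))
    (F' := fun r t => -2 * r * (t ^ (ν - 1 - 1) * exp (-t - r ^ 2 / t)))
    (bound := fun t => 4 * r * (t ^ (ν - 1 - 1) * exp (-t - (r / 2) ^ 2 / t)))
    (Ioo_mem_nhds (half_lt_self hr) (lt_two_mul_self hr))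
    (.of_forall (hmeas ν)) (integrableOn_besselIntegrand ν hr) ((hmeas (ν - 1) r).const_mul _)
    ?_ ((integrableOn_besselIntegrand (ν - 1) (half_pos hr)).const_mul _) ?_).2
  · filter_upwards [ae_restrict_mem measurableSet_Ioi] with t ht x hx
    have ht : 0 < t := ht
    have hx0 : 0 < x := (half_pos hr).trans hx.1
    rw [norm_mul, norm_mul, norm_neg, norm_two, norm_of_nonneg hx0.le,
      norm_of_nonneg (by positivity)]
    have hx1 : 2 * x ≤ 4 * r := by linarith [hx.2]
    have hx2 : r / 2 ≤ x := hx.1.le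
    gcongr
  · filter_upwards [ae_restrict_mem measurableSet_Ioi] with t ht x _
    have ht : 0 < t := ht
    refine (((((hasDerivAt_pow 2 x).div_const t).const_sub (-t)).exp).const_mul
      (t ^ (ν - 1))).congr_deriv ?_
    rw [rpow_sub_one ht.ne' (ν - 1)]
    push_cast
    ring

lemma integral_comp_const_div_Ioi (g : ℝ → ℝ) {c : ℝ} (hc : 0 < c) :
    ∫ t in Ioi (0 : ℝ), c / t ^ 2 * g (c / t) = ∫ t in Ioi (0 : ℝ), g t := by
  have hinv := integral_comp_rpow_Ioi (fun t => g (c * t)) (p := -1) (by norm_num)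
  have hscale := integral_comp_mul_left_Ioi g 0 hc
  rw [mul_zero] at hscale
  rw [← mul_inv_cancel_left₀ hc.ne' (∫ t in Ioi (0 : ℝ), g t), ← smul_eq_mul c⁻¹, ← hscale, ← hinv,
    ← integral_const_mul]
  refine setIntegral_congr_fun measurableSet_Ioi fun t ht => ?_
  have hpow : t ^ ((-1 : ℝ) - 1) = (t ^ 2)⁻¹ := by
    rw [show (-1 : ℝ) - 1 = -(2 : ℕ) by norm_num, rpow_neg (mem_Ioi.1 ht).le, rpow_natCast]
  simp only [hpow, rpow_neg_one, abs_neg, abs_one, one_mul, smul_eq_mul, div_eq_mul_inv, mul_assoc]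

lemma besselIntegral_neg (ν : ℝ) (hr : 0 < r) :
    besselIntegral (-ν) r = r ^ (-(2 * ν)) * besselIntegral ν r := by
  have hr2 : 0 < r ^ 2 := by positivity
  rw [besselIntegral, ← integral_comp_const_div_Ioi _ hr2, besselIntegral, ← integral_const_mul]
  refine setIntegral_congr_fun measurableSet_Ioi fun t ht => ?_
  have ht : 0 < t := ht
  have hexp : -(r ^ 2 / t) - r ^ 2 / (r ^ 2 / t) = -t - r ^ 2 / t := by
    field_simp
    ring
  have hpow : r ^ 2 / t ^ 2 * (r ^ 2 / t) ^ (-ν - 1) = r ^ (-(2 * ν)) * t ^ (ν - 1) := by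
    rw [rpow_sub_one (by positivity), div_rpow hr2.le ht.le, ← rpow_natCast r 2, ← rpow_mul hr.le,
      rpow_neg ht.le, rpow_sub_one ht.ne', mul_neg, Nat.cast_ofNat, rpow_two]
    field_simp
  simp only [hexp, ← mul_assoc, hpow]

/-- Differentiating the reflection formula `besselIntegral_neg` gives the recurrence. -/
lemma besselIntegral_add_one (ν : ℝ) (hr : 0 < r) :
    besselIntegral (ν + 1) r = ν * besselIntegral ν r + r ^ 2 * besselIntegral (ν - 1) r := by
  have hleft := hasDerivAt_besselIntegral (-ν) hr
  have hright := (hasDerivAt_rpow_const (p := -(2 * ν)) (.inl hr.ne')).mul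
    (hasDerivAt_besselIntegral ν hr)
  have hreflect : besselIntegral (-ν) =ᶠ[𝓝 r] fun x => x ^ (-(2 * ν)) * besselIntegral ν x := by
    filter_upwards [lt_mem_nhds hr] with x hx using besselIntegral_neg ν hx
  have hderiv := (hright.congr_of_eventuallyEq hreflect).unique hleft
  rw [show -ν - 1 = -(ν + 1) by ring, besselIntegral_neg (ν + 1) hr,
    show -(2 * (ν + 1)) = -(2 * ν) - 2 by ring, rpow_sub_one hr.ne', rpow_sub hr, rpow_two]
    at hderiv
  have hpow : r ^ (-(2 * ν)) ≠ 0 := (rpow_pos_of_pos hr _).ne'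
  field_simp at hderiv
  linarith

lemma hasDerivAt_besselIntegral' (ν : ℝ) (hr : 0 < r) :
    HasDerivAt (besselIntegral ν)
      ((2 * ν * besselIntegral ν r - 2 * besselIntegral (ν + 1) r) / r) r := by
  refine (hasDerivAt_besselIntegral ν hr).congr_deriv ?_
  rw [besselIntegral_add_one ν hr]
  field_simp
  ring

lemma besselIntegral_nonneg (ν r : ℝ) : 0 ≤ besselIntegral ν r :=
  setIntegral_nonneg measurableSet_Ioi fun t ht => by
    have : 0 < t := ht
    positivity

lemma rpow_mul_besselIntegral_le_mul_Gamma (hs : 0 ≤ s) (hν : 0 < ν) (hr : 0 < r) :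
    r ^ s * besselIntegral (ν - s / 2) r ≤ (s / 2) ^ (s / 2) * Gamma ν := by
  rw [Gamma_eq_integral hν, besselIntegral, ← integral_const_mul, ← integral_const_mul]
  refine setIntegral_mono_on ((integrableOn_besselIntegrand _ hr).const_mul _)
    ((GammaIntegral_convergent hν).const_mul _) measurableSet_Ioi fun t ht => ?_
  have ht : 0 < t := ht
  have hr2 : 0 < r ^ 2 := by positivity
  have hpow : r ^ s * t ^ (ν - s / 2 - 1) = (r ^ 2 / t) ^ (s / 2) * t ^ (ν - 1) := by
    rw [div_rpow hr2.le ht.le, ← rpow_natCast r 2, ← rpow_mul hr.le, Nat.cast_ofNat,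
      mul_div_cancel₀ s two_ne_zero, sub_right_comm, rpow_sub ht]
    ring
  have hexp : (r ^ 2 / t) ^ (s / 2) ≤ (s / 2) ^ (s / 2) * exp (r ^ 2 / t) := by
    have hbound := ProbabilityTheory.rpow_abs_le_mul_exp_abs (r ^ 2 / t)
      (div_nonneg hs zero_le_two) one_ne_zero
    rwa [abs_of_pos (by positivity), abs_one, div_one, one_mul] at hbound
  calc r ^ s * (t ^ (ν - s / 2 - 1) * exp (-t - r ^ 2 / t))
      = (r ^ 2 / t) ^ (s / 2) * t ^ (ν - 1) * exp (-t - r ^ 2 / t) := by rw [← mul_assoc, hpow]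
    _ ≤ (s / 2) ^ (s / 2) * exp (r ^ 2 / t) * t ^ (ν - 1) * exp (-t - r ^ 2 / t) := by gcongr
    _ = (s / 2) ^ (s / 2) * (exp (-t) * t ^ (ν - 1)) := by
      rw [exp_sub]
      field_simp

lemma besselIntegral_le_Gamma (hν : 0 < ν) (hr : 0 < r) : besselIntegral ν r ≤ Gamma ν := by
  simpa using rpow_mul_besselIntegral_le_mul_Gamma le_rfl hν hr

lemma exists_rpow_mul_besselIntegral_le (hs : 0 < s) (hν : 0 ≤ ν) :
    ∃ C, ∀ r, 0 < r → r ^ s * besselIntegral (ν - s / 2) r ≤ C := by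
  rcases hν.eq_or_lt with rfl | hν
  · refine ⟨Gamma (s / 2), fun r hr => ?_⟩
    rw [zero_sub, besselIntegral_neg _ hr, ← mul_assoc, ← rpow_add hr,
      mul_div_cancel₀ s two_ne_zero, add_neg_cancel, rpow_zero, one_mul]
    exact besselIntegral_le_Gamma (half_pos hs) hr
  · exact ⟨_, fun r hr => rpow_mul_besselIntegral_le_mul_Gamma hs.le hν hr⟩

lemma measurable_besselIntegral (ν : ℝ) : Measurable (besselIntegral ν) := by
  refine StronglyMeasurable.measurable ?_
  refine StronglyMeasurable.integral_prod_right
    (f := fun r t : ℝ => t ^ (ν - 1) * exp (-t - r ^ 2 / t)) (Measurable.stronglyMeasurable ?_)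
  fun_prop

end BesselIntegral

open Polynomial

section Gegenbauer

open scoped Nat

/-- The Gegenbauer polynomial `C_k^{(α)}`, defined by its three-term recurrence. -/
noncomputable def gegenbauer (α : ℝ) : ℕ → ℝ[X]
  | 0 => 1
  | 1 => 2 * C α * X
  | k + 2 => C ((k : ℝ) + 2)⁻¹ *
      (2 * ((k : ℝ[X]) + 1 + C α) * X * gegenbauer α (k + 1) -
        ((k : ℝ[X]) + 2 * C α) * gegenbauer α k)

/-- The coefficient of `(2z)^(k - 2j)` in `C_k^{(α)}(z)`. The last factor is `1 / (k - 2j)!` when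
`2j ≤ k` and vanishes otherwise. -/
noncomputable def gegenbauerCoeff (α : ℝ) (k j : ℕ) : ℝ :=
  (-1) ^ j * Gamma (α + k - j) / (Gamma α * j !) * (k.descFactorial (2 * j) / k !)

variable {α : ℝ}

lemma gegenbauer_add_two (α : ℝ) (k : ℕ) :
    ((k : ℝ[X]) + 2) * gegenbauer α (k + 2) =
      2 * ((k : ℝ[X]) + 1 + C α) * X * gegenbauer α (k + 1) -
        ((k : ℝ[X]) + 2 * C α) * gegenbauer α k := by
  have hk : ((k : ℝ[X]) + 2) * C ((k : ℝ) + 2)⁻¹ = 1 := by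
    rw [← C_eq_natCast, ← C_ofNat, ← C_add, ← C_mul, mul_inv_cancel₀ (by positivity), C_1]
  rw [gegenbauer, ← mul_assoc, hk, one_mul]

lemma one_sub_sq_mul_derivative_gegenbauer (α : ℝ) (k : ℕ) :
    (1 - X ^ 2) * derivative (gegenbauer α k) =
      ((k : ℝ[X]) + 2 * C α) * X * gegenbauer α k - ((k : ℝ[X]) + 1) * gegenbauer α (k + 1) := by
  induction k using Nat.twoStepInduction with
  | zero => simp [gegenbauer]
  | one =>
    have hrec := gegenbauer_add_two α 0
    simp only [gegenbauer, derivative_mul, derivative_X, derivative_C, derivative_ofNat,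
      Nat.cast_zero, Nat.cast_one] at hrec ⊢
    linear_combination hrec
  | more k ih ih' =>
    have hrec := gegenbauer_add_two α k
    have hrec' := gegenbauer_add_two α (k + 1)
    have hderiv := congrArg derivative hrec
    simp only [derivative_mul, derivative_sub, derivative_add, derivative_natCast, derivative_C,
      derivative_X, derivative_one, derivative_ofNat] at hderiv
    refine mul_left_cancel₀ (a := (k : ℝ[X]) + 2) (by exact_mod_cast (k + 1).succ_ne_zero) ?_
    push_cast at ih' hrec' ⊢
    linear_combination (1 - X ^ 2) * hderiv + 2 * (k + 1 + C α) * X * ih'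
      - (k + 2 * C α) * ih + (k + 2) * hrec' - (k + 2 * C α) * X * hrec

lemma succ_mul_gegenbauerCoeff_zero (hα : 0 < α) (k : ℕ) :
    (k + 1) * gegenbauerCoeff α (k + 1) 0 = (k + α) * gegenbauerCoeff α k 0 := by
  simp only [gegenbauerCoeff, Nat.factorial_succ, pow_zero, mul_zero, Nat.descFactorial_zero]
  push_cast
  rw [sub_zero, sub_zero, ← add_assoc, Gamma_add_one (by positivity)]
  field_simp
  ring

lemma add_two_mul_gegenbauerCoeff_succ (hα : 0 < α) (k j : ℕ) :
    (k + 2) * gegenbauerCoeff α (k + 2) (j + 1) =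
      (k + 1 + α) * gegenbauerCoeff α (k + 1) (j + 1) - (k + 2 * α) * gegenbauerCoeff α k j := by
  have hstep :
      (k + 2).descFactorial (2 * (j + 1)) = (k + 2) * (k + 1) * k.descFactorial (2 * j) := by
    rw [mul_add_one, Nat.succ_descFactorial_succ, Nat.succ_descFactorial_succ, mul_assoc]
  have hstep' : (k + 1).descFactorial (2 * (j + 1)) =
      (k + 1) * ((k - 2 * j) * k.descFactorial (2 * j)) := by
    rw [mul_add_one, Nat.succ_descFactorial_succ, Nat.descFactorial_succ]
  simp only [gegenbauerCoeff, hstep, hstep', Nat.factorial_succ]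
  rcases lt_or_ge k (2 * j) with hkj | hkj
  · simp [Nat.descFactorial_of_lt hkj]
  · have hpos : 0 < α + k - j := by
      have : (2 * j : ℝ) ≤ k := mod_cast hkj
      linarith [j.cast_nonneg (α := ℝ)]
    push_cast [Nat.cast_sub hkj]
    rw [show α + (k + 2) - (j + 1) = α + k - j + 1 by ring, Gamma_add_one hpos.ne',
      show α + (k + 1) - (j + 1) = α + k - j by ring, pow_succ]
    have := (Gamma_pos_of_pos hα).ne'
    field_simp
    ring

lemma sum_gegenbauerCoeff_of_le (α z : ℝ) {k N : ℕ} (hN : k / 2 + 1 ≤ N) :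
    ∑ j ∈ Finset.range N, gegenbauerCoeff α k j * (2 * z) ^ (k - 2 * j) =
      ∑ j ∈ Finset.range (k / 2 + 1), gegenbauerCoeff α k j * (2 * z) ^ (k - 2 * j) := by
  refine (Finset.sum_subset (Finset.range_subset_range.2 hN) fun j _ hj => ?_).symm
  have hkj : k < 2 * j := by
    rw [Finset.mem_range] at hj
    lia
  simp [gegenbauerCoeff, Nat.descFactorial_of_lt hkj]

lemma sum_gegenbauerCoeff_add_two (hα : 0 < α) (z : ℝ) (k N : ℕ) :
    (k + 2) * ∑ j ∈ Finset.range (N + 1), gegenbauerCoeff α (k + 2) j * (2 * z) ^ (k + 2 - 2 * j) =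
      2 * (k + 1 + α) * z *
        ∑ j ∈ Finset.range (N + 1), gegenbauerCoeff α (k + 1) j * (2 * z) ^ (k + 1 - 2 * j) -
      (k + 2 * α) * ∑ j ∈ Finset.range N, gegenbauerCoeff α k j * (2 * z) ^ (k - 2 * j) := by
  have hterm (j : ℕ) :
      gegenbauerCoeff α (k + 1) (j + 1) * ((2 * z) ^ (k + 1 - 2 * (j + 1)) * (2 * z)) =
        gegenbauerCoeff α (k + 1) (j + 1) * (2 * z) ^ (k - 2 * j) := by
    rcases lt_or_ge k (2 * j + 1) with hkj | hkj
    · have : k + 1 < 2 * (j + 1) := by lia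
      simp [gegenbauerCoeff, Nat.descFactorial_of_lt this]
    · rw [← pow_succ]
      congr 2
      lia
  have hlead := succ_mul_gegenbauerCoeff_zero hα (k + 1)
  push_cast at hlead
  rw [Finset.sum_range_succ' _ N, Finset.sum_range_succ' _ N, mul_add, mul_add, Finset.mul_sum,
    Finset.mul_sum, Finset.mul_sum, add_sub_right_comm, ← Finset.sum_sub_distrib]
  congr 1
  · refine Finset.sum_congr rfl fun j _ => ?_
    rw [show k + 2 - 2 * (j + 1) = k - 2 * j by lia]
    linear_combination (2 * z) ^ (k - 2 * j) * add_two_mul_gegenbauerCoeff_succ hα k j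
      - (k + 1 + α) * hterm j
  · rw [mul_zero, Nat.sub_zero, Nat.sub_zero, pow_succ (2 * z) (k + 1)]
    linear_combination (2 * z) ^ (k + 1) * (2 * z) * hlead

lemma eval_gegenbauer (hα : 0 < α) (k : ℕ) (z : ℝ) :
    (gegenbauer α k).eval z =
      ∑ j ∈ Finset.range (k / 2 + 1), gegenbauerCoeff α k j * (2 * z) ^ (k - 2 * j) := by
  have hGamma := (Gamma_pos_of_pos hα).ne'
  induction k using Nat.twoStepInduction with
  | zero => simp [gegenbauer, gegenbauerCoeff, hGamma]
  | one =>
    have : gegenbauerCoeff α 1 0 = α := by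
      simp [gegenbauerCoeff, Gamma_add_one hα.ne', mul_div_cancel_right₀ _ hGamma]
    simp only [gegenbauer, eval_mul, eval_ofNat, eval_C, eval_X, Finset.sum_range_one, this,
      Nat.reduceDiv, zero_add, mul_zero, Nat.sub_zero, pow_one]
    ring
  | more k ih ih' =>
    have heval := congrArg (eval z) (gegenbauer_add_two α k)
    simp only [eval_mul, eval_sub, eval_add, eval_natCast, eval_ofNat, eval_one, eval_C, eval_X]
      at heval
    refine mul_left_cancel₀ (a := (k : ℝ) + 2) (by positivity) ?_
    rw [heval, ih, ih', ← sum_gegenbauerCoeff_of_le (N := k + 4) α z (k := k) (by lia),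
      ← sum_gegenbauerCoeff_of_le (N := k + 5) α z (k := k + 1) (by lia),
      ← sum_gegenbauerCoeff_of_le (N := k + 5) α z (k := k + 2) (by lia),
      sum_gegenbauerCoeff_add_two hα]

lemma gegenbauerP_eq_eval_gegenbauer {n : ℕ} (hn : 2 ≤ n) (k : ℕ) (z : ℝ) :
    gegenbauerP n k z = (gegenbauer (((n : ℝ) - 1) / 2) k).eval z := by
  have hα : 0 < ((n : ℝ) - 1) / 2 := by
    have : (2 : ℝ) ≤ n := mod_cast hn
    linarith
  rw [eval_gegenbauer hα, gegenbauerP]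
  refine Finset.sum_congr rfl fun j hj => ?_
  have hkj : 2 * j ≤ k := by
    rw [Finset.mem_range] at hj
    lia
  have hfact : ((k - 2 * j)! : ℝ) * k.descFactorial (2 * j) = k ! :=
    mod_cast Nat.factorial_mul_descFactorial hkj
  rw [gegenbauerCoeff, ← hfact]
  have : (k.descFactorial (2 * j) : ℝ) ≠ 0 := mod_cast (Nat.descFactorial_pos.2 hkj).ne'
  field_simp

end Gegenbauer

section DilationGenerator

/-- The polynomial `C_k^{(α)}(2w - 1)`. For `w = (1 + ‖x‖²)⁻¹` the argument `2w - 1` is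
`(1 - ‖x‖²) / (1 + ‖x‖²)`. -/
noncomputable def shiftedGegenbauer (α : ℝ) (k : ℕ) : ℝ[X] :=
  (gegenbauer α k).comp (2 * X - 1)

/-- The dilation generator `(x · ∇ + a)` acting on functions `w ^ a * P w` of `w = (1 + ‖x‖²)⁻¹`,
expressed as an operator on the polynomial factor `P`. -/
noncomputable def dilationGenerator (a : ℝ) : ℝ[X] →ₗ[ℝ] ℝ[X] :=
  LinearMap.mulLeft ℝ (C a * (2 * X - 1)) - LinearMap.mulLeft ℝ (2 * X * (1 - X)) ∘ₗ derivative

lemma dilationGenerator_apply (a : ℝ) (P : ℝ[X]) :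
    dilationGenerator a P = C a * (2 * X - 1) * P - 2 * X * (1 - X) * derivative P := rfl

lemma dilationGenerator_monomial (a c : ℝ) (j : ℕ) :
    dilationGenerator a (monomial j c) =
      monomial (j + 1) (2 * (a + j) * c) - monomial j ((2 * j + a) * c) := by
  simp only [dilationGenerator_apply, ← C_mul_X_pow_eq_monomial, derivative_mul, derivative_C,
    derivative_X_pow, C_mul, C_add, C_ofNat, C_eq_natCast]
  cases j with
  | zero =>
    push_cast
    ring
  | succ j =>
    rw [Nat.add_sub_cancel]
    ring

lemma shiftedGegenbauer_add_two (α : ℝ) (k : ℕ) :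
    ((k : ℝ[X]) + 2) * shiftedGegenbauer α (k + 2) =
      2 * ((k : ℝ[X]) + 1 + C α) * (2 * X - 1) * shiftedGegenbauer α (k + 1) -
        ((k : ℝ[X]) + 2 * C α) * shiftedGegenbauer α k := by
  have hcomp := congrArg (fun P => P.comp (2 * X - 1)) (gegenbauer_add_two α k)
  simpa only [shiftedGegenbauer, mul_comp, sub_comp, add_comp, natCast_comp, ofNat_comp, one_comp,
    C_comp, X_comp, Nat.cast_ofNat] using hcomp

lemma dilationGenerator_shiftedGegenbauer (α a : ℝ) (k : ℕ) :
    dilationGenerator a (shiftedGegenbauer α k) =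
      ((k : ℝ[X]) + 1) * shiftedGegenbauer α (k + 1) +
        (C a - (k : ℝ[X]) - 2 * C α) * (2 * X - 1) * shiftedGegenbauer α k := by
  have hcomp := congrArg (fun P => P.comp (2 * X - 1)) (one_sub_sq_mul_derivative_gegenbauer α k)
  simp only [mul_comp, sub_comp, add_comp, pow_comp, natCast_comp, ofNat_comp, one_comp, C_comp,
    X_comp] at hcomp
  rw [dilationGenerator_apply, shiftedGegenbauer, shiftedGegenbauer, derivative_comp,
    derivative_sub, derivative_mul, derivative_ofNat, derivative_X, derivative_one]
  linear_combination -hcomp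

lemma smul_dilationGenerator_shiftedGegenbauer_zero (α a : ℝ) :
    (2 * α) • dilationGenerator a (shiftedGegenbauer α 0) = a • shiftedGegenbauer α 1 := by
  rw [dilationGenerator_shiftedGegenbauer, smul_eq_C_mul, smul_eq_C_mul, C_mul, C_ofNat]
  simp only [shiftedGegenbauer, gegenbauer, mul_comp, ofNat_comp, C_comp, X_comp, one_comp]
  push_cast
  ring

lemma smul_dilationGenerator_shiftedGegenbauer_succ (α a : ℝ) (k : ℕ) :
    (2 * (k + 1 + α)) • dilationGenerator a (shiftedGegenbauer α (k + 1)) =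
      ((a + k + 1) * (k + 2)) • shiftedGegenbauer α (k + 2) -
        ((2 * α + k + 1 - a) * (k + 2 * α)) • shiftedGegenbauer α k := by
  rw [dilationGenerator_shiftedGegenbauer]
  simp only [smul_eq_C_mul, C_mul, C_add, C_sub, C_ofNat, C_eq_natCast, C_1]
  push_cast
  linear_combination -(C a - k - 1 - 2 * C α) * shiftedGegenbauer_add_two α k

end DilationGenerator

section RadialProfile

/-- The radial profile of the Fourier transform of `w ^ a * P w`, `w = (1 + ‖x‖²)⁻¹`, on a space of
dimension `d`: up to a power of `π`, that transform takes the value `radialProfile d a r P` at the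
frequencies `ξ` with `π * ‖ξ‖ = r`. -/
noncomputable def radialProfile (d a r : ℝ) : ℝ[X] →ₗ[ℝ] ℝ :=
  lsum fun j => LinearMap.toSpanSingleton ℝ ℝ (besselIntegral (a + j - d / 2) r / Gamma (a + j))

/-- The eigenvalue `2^s Γ(k + (d+s)/2) / Γ(k + (d-s)/2)` of `(1 + ‖x‖²)^s (-Δ)^(s/2)` in
dimension `d`. -/
noncomputable def fracLaplacianEigenvalue (d s : ℝ) (k : ℕ) : ℝ :=
  2 ^ s * Gamma (k + (d + s) / 2) / Gamma (k + (d - s) / 2)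

lemma radialProfile_monomial (d a r c : ℝ) (j : ℕ) :
    radialProfile d a r (monomial j c) =
      c * (besselIntegral (a + j - d / 2) r / Gamma (a + j)) := by
  simp [radialProfile, lsum_apply, LinearMap.toSpanSingleton_apply]

lemma hasDerivAt_radialProfile (d : ℝ) {a r : ℝ} (ha : 0 < a) (hr : 0 < r) (P : ℝ[X]) :
    HasDerivAt (fun r => radialProfile d a r P)
      (-(radialProfile d a r (dilationGenerator a P) + (d - a) * radialProfile d a r P) / r) r := by
  induction P using Polynomial.induction_on' with
  | add P Q hP hQ =>
    simp only [map_add]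
    refine (hP.add hQ).congr_deriv ?_
    ring
  | monomial j c =>
    simp only [dilationGenerator_monomial, map_sub, radialProfile_monomial]
    refine (((hasDerivAt_besselIntegral' (a + j - d / 2) hr).div_const
      (Gamma (a + j))).const_mul c).congr_deriv ?_
    have haj : 0 < a + j := by positivity
    have hGamma := (Gamma_pos_of_pos haj).ne'
    rw [Nat.cast_succ, ← add_assoc, Gamma_add_one haj.ne', add_sub_right_comm (a + j) 1]
    field_simp
    ring

variable {d s : ℝ}

lemma fracLaplacianEigenvalue_succ (hs : 0 < s) (hsd : s < d) (k : ℕ) :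
    fracLaplacianEigenvalue d s (k + 1) * (k + (d - s) / 2) =
      fracLaplacianEigenvalue d s k * (k + (d + s) / 2) := by
  have hsub : 0 < (k : ℝ) + (d - s) / 2 := by linarith [k.cast_nonneg (α := ℝ)]
  have hadd : 0 < (k : ℝ) + (d + s) / 2 := by linarith [k.cast_nonneg (α := ℝ)]
  have hGamma := (Gamma_pos_of_pos hsub).ne'
  simp only [fracLaplacianEigenvalue, Nat.cast_succ, add_right_comm (k : ℝ) 1]
  rw [Gamma_add_one hsub.ne', Gamma_add_one hadd.ne']
  generalize (k : ℝ) + (d - s) / 2 = a at *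
  field_simp

-- Differentiate the identity in `r`.
lemma radialProfile_dilationGenerator_of_radialProfile (hs : 0 < s) (hsd : s < d) {P : ℝ[X]}
    {l : ℝ} (h : ∀ r, 0 < r →
      (2 * r) ^ s * radialProfile d ((d - s) / 2) r P = l * radialProfile d ((d + s) / 2) r P)
    {r : ℝ} (hr : 0 < r) :
    (2 * r) ^ s * radialProfile d ((d - s) / 2) r (dilationGenerator ((d - s) / 2) P) =
      l * radialProfile d ((d + s) / 2) r (dilationGenerator ((d + s) / 2) P) := by
  have hpow : HasDerivAt (fun r : ℝ => (2 * r) ^ s) (s * (2 * r) ^ s / r) r := by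
    refine (((hasDerivAt_id r).const_mul 2).rpow_const (p := s)
      (Or.inl (by simpa using hr.ne'))).congr_deriv ?_
    rw [id, rpow_sub_one (by positivity)]
    field_simp
  have hleft := hpow.mul (hasDerivAt_radialProfile d (by linarith : 0 < (d - s) / 2) hr P)
  have hright := (hasDerivAt_radialProfile d (by linarith : 0 < (d + s) / 2) hr P).const_mul l
  have heq : (fun r => (2 * r) ^ s * radialProfile d ((d - s) / 2) r P) =ᶠ[𝓝 r]
      fun r => l * radialProfile d ((d + s) / 2) r P := by
    filter_upwards [lt_mem_nhds hr] with x hx using h x hx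
  have hderiv := hleft.unique (hright.congr_of_eventuallyEq heq)
  field_simp at hderiv
  linear_combination -hderiv / 2 - (d - s) / 2 * h r hr

lemma radialProfile_shiftedGegenbauer_zero (hs : 0 < s) (hsd : s < d) (α : ℝ) {r : ℝ}
    (hr : 0 < r) :
    (2 * r) ^ s * radialProfile d ((d - s) / 2) r (shiftedGegenbauer α 0) =
      fracLaplacianEigenvalue d s 0 *
        radialProfile d ((d + s) / 2) r (shiftedGegenbauer α 0) := by
  have hmono : shiftedGegenbauer α 0 = monomial 0 1 := by simp [shiftedGegenbauer, gegenbauer]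
  have hGamma := (Gamma_pos_of_pos (by linarith : 0 < (d - s) / 2)).ne'
  have hGamma' := (Gamma_pos_of_pos (by linarith : 0 < (d + s) / 2)).ne'
  rw [hmono, radialProfile_monomial, radialProfile_monomial, fracLaplacianEigenvalue,
    Nat.cast_zero, add_zero, add_zero, zero_add, zero_add,
    show (d - s) / 2 - d / 2 = -(s / 2) by ring, show (d + s) / 2 - d / 2 = s / 2 by ring,
    besselIntegral_neg _ hr, mul_rpow zero_le_two hr.le, mul_div_cancel₀ s two_ne_zero,
    rpow_neg hr.le]
  field_simp

theorem radialProfile_shiftedGegenbauer (hs : 0 < s) (hsd : s < d) (k : ℕ) {r : ℝ} (hr : 0 < r) :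
    (2 * r) ^ s * radialProfile d ((d - s) / 2) r (shiftedGegenbauer ((d - 1) / 2) k) =
      fracLaplacianEigenvalue d s k *
        radialProfile d ((d + s) / 2) r (shiftedGegenbauer ((d - 1) / 2) k) := by
  induction k using Nat.twoStepInduction generalizing r with
  | zero => exact radialProfile_shiftedGegenbauer_zero hs hsd _ hr
  | one =>
    have hstep := radialProfile_dilationGenerator_of_radialProfile hs hsd
      (fun r hr => radialProfile_shiftedGegenbauer_zero hs hsd ((d - 1) / 2) hr) hr
    have hdil (a : ℝ) := congrArg (radialProfile d a r)
      (smul_dilationGenerator_shiftedGegenbauer_zero ((d - 1) / 2) a)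
    have hlam := fracLaplacianEigenvalue_succ hs hsd 0
    simp only [map_smul, smul_eq_mul, Nat.cast_zero, zero_add] at hdil hlam
    refine mul_left_cancel₀ (a := (d - s) / 2) (by linarith) ?_
    linear_combination (d - 1) * hstep - (2 * r) ^ s * hdil ((d - s) / 2)
      + fracLaplacianEigenvalue d s 0 * hdil ((d + s) / 2)
      - radialProfile d ((d + s) / 2) r (shiftedGegenbauer _ 1) * hlam
  | more k ih ih' =>
    have hstep := radialProfile_dilationGenerator_of_radialProfile hs hsd (fun r hr => ih' hr) hr
    have hdil (a : ℝ) := congrArg (radialProfile d a r)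
      (smul_dilationGenerator_shiftedGegenbauer_succ ((d - 1) / 2) a k)
    have hlam := fracLaplacianEigenvalue_succ hs hsd k
    have hlam' := fracLaplacianEigenvalue_succ hs hsd (k + 1)
    simp only [map_sub, map_smul, smul_eq_mul, Nat.cast_succ] at hdil hlam'
    refine mul_left_cancel₀ (a := ((d - s) / 2 + k + 1) * (k + 2))
      (mul_pos (by linarith [k.cast_nonneg (α := ℝ)]) (by positivity)).ne' ?_
    linear_combination (2 * k + 1 + d) * hstep - (2 * r) ^ s * hdil ((d - s) / 2)
      + fracLaplacianEigenvalue d s (k + 1) * hdil ((d + s) / 2)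
      + (d - 1 + k + 1 - (d - s) / 2) * (k + d - 1) * ih hr
      - (k + 2) * radialProfile d ((d + s) / 2) r (shiftedGegenbauer _ (k + 2)) * hlam'
      - (k + d - 1) * radialProfile d ((d + s) / 2) r (shiftedGegenbauer _ k) * hlam

end RadialProfile

section GaussianSubordination

variable {V E : Type*} [NormedAddCommGroup V] [InnerProductSpace ℝ V] [FiniteDimensional ℝ V]
  [MeasurableSpace V] [BorelSpace V] [NormedAddCommGroup E] [NormedSpace ℂ E] {h : V → E} {a : ℝ}

lemma ae_norm_pos [Nontrivial V] : ∀ᵐ ξ : V, 0 < ‖ξ‖ := by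
  filter_upwards [Measure.ae_ne volume (0 : V)] with ξ hξ using norm_pos_iff.2 hξ

lemma integral_exp_neg_mul_sq_smul_fourierInv [CompleteSpace E] (hh : Integrable h) {t : ℝ}
    (ht : 0 < t) :
    ∫ x, exp (-t * ‖x‖ ^ 2) • 𝓕⁻ h x =
      ∫ ξ, ((π / t) ^ (Module.finrank ℝ V / 2 : ℝ) * exp (-(π * ‖ξ‖) ^ 2 / t)) • h ξ := by
  have hre : 0 < (t : ℂ).re := ht
  have hgauss : Integrable fun v : V => Complex.exp (-(t : ℂ) * ‖v‖ ^ 2) := by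
    simpa using GaussianFourier.integrable_cexp_neg_mul_sq_norm_add hre 0 (0 : V)
  have hflip := VectorFourier.integral_fourierIntegral_smul_eq_flip (L := innerₗ V)
    (μ := volume) (ν := volume) continuous_fourierChar continuous_inner hgauss hh
  rw [flip_innerₗ] at hflip
  calc ∫ x, exp (-t * ‖x‖ ^ 2) • 𝓕⁻ h x
      = ∫ x, Complex.exp (-(t : ℂ) * ‖x‖ ^ 2) • 𝓕 h x := by
        rw [← integral_neg_eq_self]
        refine integral_congr_ae (.of_forall fun x => ?_)
        simp only [norm_neg, fourierInv_eq_fourier_neg, neg_neg, ← Complex.coe_smul]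
        push_cast
        rfl
    _ = ∫ ξ, 𝓕 (fun v : V => Complex.exp (-(t : ℂ) * ‖v‖ ^ 2)) ξ • h ξ := hflip.symm
    _ = _ := by
        refine integral_congr_ae (.of_forall fun ξ => ?_)
        simp only [fourier_gaussian_innerProductSpace hre, ← Complex.coe_smul]
        push_cast [Complex.ofReal_cpow (div_pos pi_pos ht).le]
        rw [mul_pow, neg_mul]

lemma integrable_prod_rpow_mul_exp_smul (ha : 0 < a) {g : V → E} (hg : Integrable g) :
    Integrable (fun p : V × ℝ => (p.2 ^ (a - 1) * exp (-((1 + ‖p.1‖ ^ 2) * p.2))) • g p.1)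
      (volume.prod (volume.restrict (Ioi 0))) := by
  have hGamma : IntegrableOn (fun t : ℝ => exp (-t) * t ^ (a - 1)) (Ioi 0) :=
    GammaIntegral_convergent ha
  have hpos : ∀ᵐ p ∂((volume : Measure V).prod (volume.restrict (Ioi (0 : ℝ)))), 0 < p.2 :=
    Measure.quasiMeasurePreserving_snd.ae (ae_restrict_mem measurableSet_Ioi)
  have hmeas : Measurable fun p : V × ℝ => p.2 ^ (a - 1) * exp (-((1 + ‖p.1‖ ^ 2) * p.2)) := by
    fun_prop
  refine (hGamma.mul_prod hg.norm).swap.mono' ?_ ?_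
  · exact hmeas.aestronglyMeasurable.smul hg.aestronglyMeasurable.comp_fst
  · filter_upwards [hpos] with p hp
    rw [norm_smul, norm_of_nonneg (by positivity), mul_comm (p.2 ^ _)]
    dsimp only [Function.comp_apply, Prod.fst_swap, Prod.snd_swap]
    gcongr
    nlinarith [mul_nonneg (sq_nonneg ‖p.1‖) hp.le]

lemma integrable_prod_besselIntegrand_smul [Nontrivial V] {ν : ℝ}
    (hh : AEStronglyMeasurable h)
    (hbessel : Integrable fun ξ => besselIntegral ν (π * ‖ξ‖) • h ξ) :
    Integrable (fun p : V × ℝ => (p.2 ^ (ν - 1) * exp (-p.2 - (π * ‖p.1‖) ^ 2 / p.2)) • h p.1)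
      (volume.prod (volume.restrict (Ioi 0))) := by
  have hmeas : Measurable fun p : V × ℝ =>
      p.2 ^ (ν - 1) * exp (-p.2 - (π * ‖p.1‖) ^ 2 / p.2) := by fun_prop
  refine (integrable_prod_iff ?_).2 ⟨?_, hbessel.norm.congr (.of_forall fun ξ => ?_)⟩
  · exact hmeas.aestronglyMeasurable.smul hh.comp_fst
  · filter_upwards [ae_norm_pos] with ξ hξ
    exact (integrableOn_besselIntegrand ν (mul_pos pi_pos hξ)).smul_const _
  · dsimp only
    rw [norm_smul, norm_of_nonneg (besselIntegral_nonneg _ _), besselIntegral, ← integral_mul_const]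
    refine setIntegral_congr_fun measurableSet_Ioi fun t ht => ?_
    have ht : 0 < t := ht
    rw [norm_smul, norm_of_nonneg (by positivity)]

lemma rpow_neg_eq_integral (ha : 0 < a) {b : ℝ} (hb : 0 < b) :
    b ^ (-a) = (Gamma a)⁻¹ * ∫ t in Ioi (0 : ℝ), t ^ (a - 1) * exp (-(b * t)) := by
  have := (Gamma_pos_of_pos ha).ne'
  rw [integral_rpow_mul_exp_neg_mul_Ioi ha hb, rpow_neg hb.le, one_div, inv_rpow hb.le]
  field_simp

lemma integral_rpow_mul_exp_smul_fourierInv [CompleteSpace E] (hh : Integrable h) (a : ℝ) {t : ℝ}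
    (ht : 0 < t) :
    ∫ x, (t ^ (a - 1) * exp (-((1 + ‖x‖ ^ 2) * t))) • 𝓕⁻ h x =
      π ^ (Module.finrank ℝ V / 2 : ℝ) •
        ∫ ξ, (t ^ (a - Module.finrank ℝ V / 2 - 1) * exp (-t - (π * ‖ξ‖) ^ 2 / t)) • h ξ := by
  set d : ℝ := Module.finrank ℝ V / 2
  calc ∫ x, (t ^ (a - 1) * exp (-((1 + ‖x‖ ^ 2) * t))) • 𝓕⁻ h x
      = ∫ x, (t ^ (a - 1) * exp (-t)) • exp (-t * ‖x‖ ^ 2) • 𝓕⁻ h x := by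
        refine integral_congr_ae (.of_forall fun x => ?_)
        dsimp only
        rw [smul_smul, mul_assoc, ← exp_add]
        ring_nf
    _ = ∫ ξ, (t ^ (a - 1) * exp (-t)) • ((π / t) ^ d * exp (-(π * ‖ξ‖) ^ 2 / t)) • h ξ := by
        rw [integral_smul, integral_exp_neg_mul_sq_smul_fourierInv hh ht, integral_smul]
    _ = ∫ ξ, π ^ d • (t ^ (a - d - 1) * exp (-t - (π * ‖ξ‖) ^ 2 / t)) • h ξ := by
        refine integral_congr_ae (.of_forall fun ξ => ?_)
        dsimp only
        rw [smul_smul, smul_smul, div_rpow pi_pos.le ht.le, sub_right_comm a, rpow_sub ht (a - 1),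
          sub_eq_add_neg (-t), exp_add, neg_div]
        ring_nf
    _ = _ := integral_smul _ _

theorem integral_rpow_neg_smul_fourierInv [Nontrivial V] [CompleteSpace E] (ha : 0 < a)
    (hh : Integrable h) (hFh : Integrable (𝓕⁻ h))
    (hbessel : Integrable fun ξ =>
      besselIntegral (a - Module.finrank ℝ V / 2) (π * ‖ξ‖) • h ξ) :
    ∫ x, (1 + ‖x‖ ^ 2) ^ (-a) • 𝓕⁻ h x =
      π ^ (Module.finrank ℝ V / 2 : ℝ) • ∫ ξ,
        (besselIntegral (a - Module.finrank ℝ V / 2) (π * ‖ξ‖) / Gamma a) • h ξ := by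
  calc ∫ x, (1 + ‖x‖ ^ 2) ^ (-a) • 𝓕⁻ h x
      = (Gamma a)⁻¹ • ∫ x, ∫ t in Ioi (0 : ℝ),
          (t ^ (a - 1) * exp (-((1 + ‖x‖ ^ 2) * t))) • 𝓕⁻ h x := by
        rw [← integral_smul]
        refine integral_congr_ae (.of_forall fun x => ?_)
        dsimp only
        rw [integral_smul_const, smul_smul,
          rpow_neg_eq_integral ha (by positivity : 0 < 1 + ‖x‖ ^ 2)]
    _ = (Gamma a)⁻¹ • π ^ (Module.finrank ℝ V / 2 : ℝ) • ∫ t in Ioi (0 : ℝ), ∫ ξ,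
          (t ^ (a - Module.finrank ℝ V / 2 - 1) * exp (-t - (π * ‖ξ‖) ^ 2 / t)) • h ξ := by
        rw [integral_integral_swap (integrable_prod_rpow_mul_exp_smul ha hFh),
          setIntegral_congr_fun measurableSet_Ioi fun t ht =>
            integral_rpow_mul_exp_smul_fourierInv hh a ht, integral_smul]
    _ = _ := by
        rw [← integral_integral_swap
          (integrable_prod_besselIntegrand_smul hh.aestronglyMeasurable hbessel), smul_comm,
          ← integral_smul]
        congr 1
        refine integral_congr_ae (.of_forall fun ξ => ?_)
        dsimp only
        rw [integral_smul_const, smul_smul, ← besselIntegral, inv_mul_eq_div]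

end GaussianSubordination

section RationalWeight

variable {V E : Type*} [NormedAddCommGroup V]

/-- The weight `w ^ a * P w` on `V`, where `w = (1 + ‖x‖²)⁻¹`. -/
noncomputable def rationalWeight (a : ℝ) (P : ℝ[X]) (x : V) : ℝ :=
  (1 + ‖x‖ ^ 2) ^ (-a) * P.eval (1 + ‖x‖ ^ 2)⁻¹

lemma rationalWeight_add (a : ℝ) (P Q : ℝ[X]) (x : V) :
    rationalWeight a (P + Q) x = rationalWeight a P x + rationalWeight a Q x := by
  simp only [rationalWeight, eval_add, mul_add]

lemma rationalWeight_monomial (a c : ℝ) (j : ℕ) (x : V) :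
    rationalWeight a (monomial j c) x = c * (1 + ‖x‖ ^ 2) ^ (-(a + j)) := by
  have hpos : 0 < 1 + ‖x‖ ^ 2 := by positivity
  rw [rationalWeight, eval_monomial, neg_add, rpow_add hpos, rpow_neg hpos.le (j : ℝ), rpow_natCast,
    inv_pow]
  ring

variable [InnerProductSpace ℝ V] [FiniteDimensional ℝ V] [MeasurableSpace V] [BorelSpace V]
  [NormedAddCommGroup E] [NormedSpace ℂ E] {h φ : V → E} {a s : ℝ}

lemma integrable_rationalWeight_smul (ha : 0 ≤ a) (P : ℝ[X]) (hh : Integrable h) :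
    Integrable fun x => rationalWeight a P x • h x := by
  induction P using Polynomial.induction_on' with
  | add P Q hP hQ =>
    simp only [rationalWeight_add, add_smul]
    exact hP.add hQ
  | monomial j c =>
    simp only [rationalWeight_monomial, mul_smul]
    have hmeas : Measurable fun x : V => (1 + ‖x‖ ^ 2) ^ (-(a + j)) := by fun_prop
    refine (hh.bdd_smul 1 hmeas.aestronglyMeasurable (.of_forall fun x => ?_)).smul c
    rw [norm_of_nonneg (by positivity)]
    exact rpow_le_one_of_one_le_of_nonpos (le_add_of_nonneg_right (sq_nonneg _))
      (neg_nonpos.2 (by positivity))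

lemma integrable_radialProfile_smul (d : ℝ)
    (hbessel : ∀ j : ℕ, Integrable fun ξ => besselIntegral (a + j - d / 2) (π * ‖ξ‖) • h ξ)
    (P : ℝ[X]) : Integrable fun ξ => radialProfile d a (π * ‖ξ‖) P • h ξ := by
  induction P using Polynomial.induction_on' with
  | add P Q hP hQ =>
    simp only [map_add, add_smul]
    exact hP.add hQ
  | monomial j c =>
    refine ((hbessel j).smul (c / Gamma (a + j))).congr (.of_forall fun ξ => ?_)
    simp only [Pi.smul_apply, radialProfile_monomial, smul_smul]
    ring_nf

theorem integral_rationalWeight_smul_fourierInv [Nontrivial V] [CompleteSpace E] (ha : 0 < a)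
    (hh : Integrable h) (hFh : Integrable (𝓕⁻ h))
    (hbessel : ∀ j : ℕ, Integrable fun ξ =>
      besselIntegral (a + j - Module.finrank ℝ V / 2) (π * ‖ξ‖) • h ξ) (P : ℝ[X]) :
    ∫ x, rationalWeight a P x • 𝓕⁻ h x =
      π ^ (Module.finrank ℝ V / 2 : ℝ) •
        ∫ ξ, radialProfile (Module.finrank ℝ V) a (π * ‖ξ‖) P • h ξ := by
  induction P using Polynomial.induction_on' with
  | add P Q hP hQ =>
    simp only [rationalWeight_add, map_add, add_smul]
    rw [integral_add (integrable_rationalWeight_smul ha.le P hFh)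
      (integrable_rationalWeight_smul ha.le Q hFh), hP, hQ, ← smul_add,
      integral_add (integrable_radialProfile_smul _ hbessel P)
        (integrable_radialProfile_smul _ hbessel Q)]
  | monomial j c =>
    simp only [rationalWeight_monomial, radialProfile_monomial, mul_smul, integral_smul]
    rw [integral_rpow_neg_smul_fourierInv (by positivity) hh hFh (hbessel j), smul_comm]

/-- The fractional Laplacian `(-Δ)^(s/2)`, as the Fourier multiplier with symbol `(2π‖ξ‖)^s`. -/
noncomputable def fracLaplacian (s : ℝ) (φ : V → E) : V → E :=
  𝓕⁻ fun ξ => (2 * π * ‖ξ‖) ^ s • 𝓕 φ ξ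

lemma integrable_besselIntegral_smul_rpow_smul [Nontrivial V] (hs : 0 < s) {ν : ℝ} (hν : 0 ≤ ν)
    (hh : Integrable h) :
    Integrable fun ξ => besselIntegral (ν - s / 2) (π * ‖ξ‖) • (2 * π * ‖ξ‖) ^ s • h ξ := by
  obtain ⟨C, hC⟩ := exists_rpow_mul_besselIntegral_le hs hν
  have hmeas : Measurable fun ξ : V =>
      besselIntegral (ν - s / 2) (π * ‖ξ‖) * (2 * π * ‖ξ‖) ^ s :=
    ((measurable_besselIntegral _).comp (by fun_prop)).mul (by fun_prop)
  simp only [smul_smul]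
  refine hh.bdd_smul (𝕜 := ℝ) (2 ^ s * C) hmeas.aestronglyMeasurable ?_
  filter_upwards [ae_norm_pos] with ξ hξ
  rw [norm_of_nonneg (mul_nonneg (besselIntegral_nonneg _ _) (by positivity)), mul_assoc 2,
    mul_rpow zero_le_two (by positivity), mul_left_comm, mul_comm (besselIntegral _ _)]
  gcongr
  exact hC _ (by positivity)

lemma integrable_besselIntegral_smul [Nontrivial V] {ν : ℝ} (hν : 0 < ν) (hh : Integrable h) :
    Integrable fun ξ => besselIntegral ν (π * ‖ξ‖) • h ξ := by
  have hmeas : Measurable fun ξ : V => besselIntegral ν (π * ‖ξ‖) :=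
    (measurable_besselIntegral ν).comp (by fun_prop)
  refine hh.bdd_smul (𝕜 := ℝ) (Gamma ν) hmeas.aestronglyMeasurable ?_
  filter_upwards [ae_norm_pos] with ξ hξ
  rw [norm_of_nonneg (besselIntegral_nonneg _ _)]
  exact besselIntegral_le_Gamma hν (by positivity)

theorem integral_rationalWeight_smul_fracLaplacian [CompleteSpace E]
    (hs : s ∈ Ioo 0 (Module.finrank ℝ V : ℝ)) (k : ℕ) (hcont : Continuous φ) (hφ : Integrable φ)
    (hFφ : Integrable (𝓕 φ)) (hsymbol : Integrable fun ξ => (2 * π * ‖ξ‖) ^ s • 𝓕 φ ξ)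
    (hlap : Integrable (fracLaplacian s φ)) :
    ∫ x, rationalWeight ((Module.finrank ℝ V - s) / 2)
        (shiftedGegenbauer ((Module.finrank ℝ V - 1) / 2) k) x • fracLaplacian s φ x =
      fracLaplacianEigenvalue (Module.finrank ℝ V) s k •
        ∫ x, rationalWeight ((Module.finrank ℝ V + s) / 2)
          (shiftedGegenbauer ((Module.finrank ℝ V - 1) / 2) k) x • φ x := by
  obtain ⟨hs0, hsd⟩ := hs
  have : Nontrivial V := Module.finrank_pos_iff.1 (Nat.cast_pos.1 (hs0.trans hsd))
  set d : ℝ := (Module.finrank ℝ V : ℝ) with hd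
  have hinv : 𝓕⁻ (𝓕 φ) = φ := hcont.fourierInv_fourier_eq hφ hFφ
  have hsub (j : ℕ) : Integrable fun ξ => besselIntegral ((d - s) / 2 + j - d / 2) (π * ‖ξ‖) •
      (2 * π * ‖ξ‖) ^ s • 𝓕 φ ξ := by
    rw [show (d - s) / 2 + j - d / 2 = j - s / 2 by ring]
    exact integrable_besselIntegral_smul_rpow_smul hs0 j.cast_nonneg hFφ
  have hadd (j : ℕ) : Integrable fun ξ => besselIntegral ((d + s) / 2 + j - d / 2) (π * ‖ξ‖) •
      𝓕 φ ξ := by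
    rw [show (d + s) / 2 + j - d / 2 = s / 2 + j by ring]
    exact integrable_besselIntegral_smul (by positivity) hFφ
  have hprofile : ∀ᵐ ξ : V,
      radialProfile d ((d - s) / 2) (π * ‖ξ‖) (shiftedGegenbauer ((d - 1) / 2) k) •
        (2 * π * ‖ξ‖) ^ s • 𝓕 φ ξ =
      fracLaplacianEigenvalue d s k •
        radialProfile d ((d + s) / 2) (π * ‖ξ‖) (shiftedGegenbauer ((d - 1) / 2) k) •
          𝓕 φ ξ := by
    filter_upwards [ae_norm_pos] with ξ hξ
    rw [smul_smul, smul_smul, ← radialProfile_shiftedGegenbauer hs0 hsd k (by positivity),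
      mul_comm, mul_assoc 2]
  rw [fracLaplacian, integral_rationalWeight_smul_fourierInv (by linarith) hsymbol hlap hsub,
    ← hd, integral_congr_ae hprofile, integral_smul, smul_comm]
  conv_rhs => rw [← hinv]
  rw [integral_rationalWeight_smul_fourierInv (by linarith) hFφ (by rwa [hinv]) hadd]

end RationalWeight

section FourierL1

variable {V E : Type*} [NormedAddCommGroup V] [InnerProductSpace ℝ V] [NormedAddCommGroup E]
  [NormedSpace ℂ E]

/-- Multiplication of a Schwartz function by `‖ξ‖ ^ (2 * m)`. -/
noncomputable def schwartzNormSqPow (m : ℕ) (A : 𝓢(V, E)) : 𝓢(V, E) :=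
  smulLeftCLM E (fun ξ : V => (‖ξ‖ ^ 2) ^ m) A

lemma schwartzNormSqPow_apply (m : ℕ) (A : 𝓢(V, E)) (ξ : V) :
    schwartzNormSqPow m A ξ = (‖ξ‖ ^ 2) ^ m • A ξ :=
  smulLeftCLM_apply_apply ((Function.hasTemperateGrowth_norm_sq V).pow m) A ξ

/-- The dilation `ξ ↦ A (l • ξ)` of a Schwartz function. -/
noncomputable def schwartzDilation {l : ℝ} (hl : l ≠ 0) (A : 𝓢(V, E)) : 𝓢(V, E) :=
  compCLMOfContinuousLinearEquiv ℂ
    (ContinuousLinearEquiv.smulLeft (R₁ := ℝ) (M₁ := V) (Units.mk0 l hl)) A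

variable [FiniteDimensional ℝ V] [MeasurableSpace V] [BorelSpace V]

/-- The `L¹` norm of the inverse Fourier transform of `A`. -/
noncomputable def fourierL1 (A : V → E) : ℝ := ∫ x, ‖𝓕⁻ A x‖

lemma fourierL1_nonneg (A : V → E) : 0 ≤ fourierL1 A :=
  integral_nonneg fun _ => norm_nonneg _

lemma fourierL1_const_smul {c : ℝ} (hc : 0 ≤ c) (A : V → E) :
    fourierL1 (fun ξ => c • A ξ) = c * fourierL1 A := by
  have hsmul (x : V) : 𝓕⁻ (fun ξ => c • A ξ) x = c • 𝓕⁻ A x := by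
    simp only [fourierInv_eq, smul_comm _ c, integral_smul]
  simp only [fourierL1, hsmul, norm_smul, norm_of_nonneg hc, integral_const_mul]

lemma fourierL1_comp_smul (A : V → E) {l : ℝ} (hl : 0 < l) :
    fourierL1 (fun ξ => A (l • ξ)) = fourierL1 A := by
  have hdil (x : V) :
      𝓕⁻ (fun ξ => A (l • ξ)) x = (l ^ Module.finrank ℝ V)⁻¹ • 𝓕⁻ A (l⁻¹ • x) := by
    rw [fourierInv_eq, fourierInv_eq, ← Measure.integral_comp_smul_of_nonneg volume
      (fun ξ => 𝐞 (inner ℝ ξ (l⁻¹ • x)) • A ξ) l (hR := hl.le)]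
    simp only [inner_smul_left, inner_smul_right, conj_trivial, inv_mul_cancel_left₀ hl.ne']
  simp only [fourierL1, hdil, norm_smul]
  rw [integral_const_mul, Measure.integral_comp_inv_smul_of_nonneg volume (fun x => ‖𝓕⁻ A x‖) hl.le,
    norm_of_nonneg (by positivity), smul_eq_mul, inv_mul_cancel_left₀ (by positivity)]

lemma integrable_fourierInv_schwartz (A : 𝓢(V, E)) : Integrable (𝓕⁻ (A : V → E)) := by
  rw [← fourierInv_coe]
  exact (𝓕⁻ A).integrable

lemma integrable_fourierInv_comp_smul_smul (A : 𝓢(V, ℂ)) (B : 𝓢(V, E)) {l : ℝ} (hl : 0 < l) :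
    Integrable (𝓕⁻ fun ξ => A (l • ξ) • B ξ) :=
  integrable_fourierInv_schwartz
    (pairing (ContinuousLinearMap.lsmul ℂ ℂ) (schwartzDilation hl.ne' A) B)

variable [CompleteSpace E]

lemma fourierInv_smul_eq_convolution (A : 𝓢(V, ℂ)) (B : 𝓢(V, E)) :
    𝓕⁻ (fun ξ => A ξ • B ξ) =
      convolution (𝓕⁻ A : 𝓢(V, ℂ)) (𝓕⁻ B : 𝓢(V, E)) (ContinuousLinearMap.lsmul ℂ ℂ) volume := by
  have hpairing : (fun ξ => A ξ • B ξ) = pairing (ContinuousLinearMap.lsmul ℂ ℂ) A B := by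
    ext ξ
    simp
  have hconv := fourier_convolution (ContinuousLinearMap.lsmul ℂ ℂ) (𝓕⁻ A) (𝓕⁻ B)
  rw [FourierTransform.fourier_fourierInv_eq, FourierTransform.fourier_fourierInv_eq] at hconv
  ext x
  rw [hpairing, ← hconv, ← fourierInv_coe, FourierTransform.fourierInv_fourier_eq,
    SchwartzMap.convolution_apply]

lemma fourierL1_smul_le (A : 𝓢(V, ℂ)) (B : 𝓢(V, E)) :
    fourierL1 (fun ξ => A ξ • B ξ) ≤ fourierL1 A * fourierL1 B := by
  have hA := (𝓕⁻ A).integrable (μ := volume)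
  have hB := (𝓕⁻ B).integrable (μ := volume)
  calc fourierL1 (fun ξ => A ξ • B ξ)
      ≤ ∫ x, convolution (fun y => ‖(𝓕⁻ A) y‖) (fun y => ‖(𝓕⁻ B) y‖)
          (ContinuousLinearMap.mul ℝ ℝ) volume x := by
        refine integral_mono_of_nonneg (.of_forall fun _ => norm_nonneg _)
          (hA.norm.integrable_convolution (ContinuousLinearMap.mul ℝ ℝ) hB.norm)
          (.of_forall fun x => ?_)
        dsimp only
        rw [fourierInv_smul_eq_convolution, convolution_def, convolution_def]
        refine (norm_integral_le_integral_norm _).trans_eq ?_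
        simp only [ContinuousLinearMap.lsmul_apply, norm_smul, ContinuousLinearMap.mul_apply']
    _ = fourierL1 A * fourierL1 B := by
        rw [integral_convolution _ hA.norm hB.norm, ContinuousLinearMap.mul_apply', fourierL1,
          fourierL1, fourierInv_coe, fourierInv_coe]

lemma fourierL1_comp_smul_smul_le (A : 𝓢(V, ℂ)) (B : 𝓢(V, E)) {l : ℝ} (hl : 0 < l) :
    fourierL1 (fun ξ => A (l • ξ) • B ξ) ≤ fourierL1 A * fourierL1 B := by
  rw [← fourierL1_comp_smul A hl]
  exact fourierL1_smul_le (schwartzDilation hl.ne' A) B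

end FourierL1

section RadialCutoff

/-- A smooth even cutoff function on `ℝ`, equal to `1` near `0` and to `0` near infinity. -/
noncomputable def radialCutoff (r : ℝ) : ℝ := smoothTransition (2 - r ^ 2)

lemma radialCutoff_nonneg (r : ℝ) : 0 ≤ radialCutoff r := smoothTransition.nonneg _

lemma radialCutoff_le_one (r : ℝ) : radialCutoff r ≤ 1 := smoothTransition.le_one _

lemma radialCutoff_of_le_one {r : ℝ} (hr0 : 0 ≤ r) (hr : r ≤ 1) : radialCutoff r = 1 :=
  smoothTransition.one_of_one_le (by nlinarith)

lemma radialCutoff_of_two_le {r : ℝ} (hr : 2 ≤ r) : radialCutoff r = 0 :=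
  smoothTransition.zero_of_nonpos (by nlinarith)

lemma continuous_radialCutoff : Continuous radialCutoff :=
  smoothTransition.continuous.comp (by fun_prop)

variable {p : ℝ}

lemma integrableOn_rpow_mul_radialCutoff (hp : -1 < p) :
    IntegrableOn (fun l => l ^ p * radialCutoff l) (Ioi 0) := by
  have hIoo : IntegrableOn (fun l : ℝ => l ^ p) (Ioo 0 2) :=
    (intervalIntegral.integrableOn_Ioo_rpow_iff two_pos).2 hp
  have hprod : IntegrableOn (fun l : ℝ => l ^ p * radialCutoff l) (Ioo 0 2) := by
    refine hIoo.mul_bdd (c := 1) continuous_radialCutoff.aestronglyMeasurable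
      (.of_forall fun l => ?_)
    rw [norm_of_nonneg (radialCutoff_nonneg l)]
    exact radialCutoff_le_one l
  refine hprod.of_forall_sdiff_eq_zero measurableSet_Ioi fun l hl => ?_
  rw [radialCutoff_of_two_le (not_lt.1 fun h => hl.2 ⟨hl.1, h⟩), mul_zero]

lemma integral_rpow_mul_radialCutoff_pos (hp : -1 < p) :
    0 < ∫ l in Ioi (0 : ℝ), l ^ p * radialCutoff l := by
  have hnonneg (l : ℝ) (hl : l ∈ Ioi 0) : 0 ≤ l ^ p * radialCutoff l :=
    mul_nonneg (rpow_nonneg (le_of_lt hl) p) (radialCutoff_nonneg l)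
  rw [setIntegral_pos_iff_support_of_nonneg_ae (ae_restrict_of_forall_mem measurableSet_Ioi hnonneg)
    (integrableOn_rpow_mul_radialCutoff hp)]
  refine lt_of_lt_of_le (by simp : 0 < volume (Ioo (0 : ℝ) 1)) (measure_mono fun l hl => ⟨?_, hl.1⟩)
  rw [Function.mem_support, radialCutoff_of_le_one hl.1.le hl.2.le, mul_one]
  exact (rpow_pos_of_pos hl.1 p).ne'

lemma rpow_mul_pow_mul_radialCutoff_mul (s : ℝ) (m : ℕ) {r l : ℝ} (hr : 0 < r) (hl : 0 < l) :
    l ^ (-s - 1) * ((l * r) ^ 2) ^ m * radialCutoff (l * r) =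
      r ^ (s + 1) * ((r * l) ^ (2 * m - s - 1) * radialCutoff (r * l)) := by
  have hrl : 0 < r * l := mul_pos hr hl
  have hsplit : (2 * m - s - 1 : ℝ) = (2 * m : ℕ) + (-s - 1) := by
    push_cast
    ring
  rw [hsplit, rpow_add hrl, rpow_natCast, mul_rpow hr.le hl.le, mul_comm l r, ← pow_mul,
    show -s - 1 = -(s + 1) by ring, rpow_neg hr.le]
  field_simp

lemma integrableOn_rpow_mul_pow_mul_radialCutoff {s : ℝ} {m : ℕ} (hm : s < 2 * m) {r : ℝ}
    (hr : 0 < r) :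
    IntegrableOn (fun l => l ^ (-s - 1) * ((l * r) ^ 2) ^ m * radialCutoff (l * r)) (Ioi 0) := by
  have hp : -1 < 2 * m - s - 1 := by linarith
  refine IntegrableOn.congr_fun ?_ (fun l hl => (rpow_mul_pow_mul_radialCutoff_mul s m hr hl).symm)
    measurableSet_Ioi
  refine Integrable.const_mul ?_ _
  refine (integrableOn_Ioi_comp_mul_left_iff (fun l => l ^ (2 * m - s - 1) * radialCutoff l) 0 hr).2
    ?_
  rw [mul_zero]
  exact integrableOn_rpow_mul_radialCutoff hp

lemma integral_rpow_mul_pow_mul_radialCutoff (s : ℝ) (m : ℕ) {r : ℝ} (hr : 0 < r) :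
    ∫ l in Ioi (0 : ℝ), l ^ (-s - 1) * ((l * r) ^ 2) ^ m * radialCutoff (l * r) =
      (∫ l in Ioi (0 : ℝ), l ^ (2 * m - s - 1) * radialCutoff l) * r ^ s := by
  rw [setIntegral_congr_fun measurableSet_Ioi fun l hl =>
      rpow_mul_pow_mul_radialCutoff_mul s m hr hl, integral_const_mul,
    integral_comp_mul_left_Ioi (fun l => l ^ (2 * m - s - 1) * radialCutoff l) 0 hr, mul_zero,
    smul_eq_mul, rpow_add_one hr.ne']
  field_simp

lemma integrableOn_rpow_mul_of_le {g : ℝ → ℝ} {s C D : ℝ} {N : ℕ} (hs : 0 < s) (hN : s < N)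
    (hmeas : AEStronglyMeasurable g) (hg0 : ∀ l, 0 < l → 0 ≤ g l)
    (hgC : ∀ l, 0 < l → g l ≤ C * l ^ N) (hgD : ∀ l, 0 < l → g l ≤ D) :
    IntegrableOn (fun l => l ^ (-s - 1) * g l) (Ioi 0) := by
  have hrpow : Measurable fun l : ℝ => l ^ (-s - 1) := by fun_prop
  have hprod := (hrpow.aestronglyMeasurable (μ := volume)).mul hmeas
  rw [← Ioc_union_Ioi_eq_Ioi zero_le_one]
  refine .union ?_ ?_
  · have hint : IntegrableOn (fun l : ℝ => C * l ^ (N - s - 1 : ℝ)) (Ioc 0 1) :=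
      (intervalIntegral.intervalIntegrable_rpow' (r := N - s - 1) (by linarith)).1.const_mul C
    refine hint.mono' hprod.restrict (ae_restrict_of_forall_mem measurableSet_Ioc fun l hl => ?_)
    rw [norm_of_nonneg (mul_nonneg (rpow_nonneg hl.1.le _) (hg0 l hl.1))]
    calc l ^ (-s - 1) * g l ≤ l ^ (-s - 1) * (C * l ^ N) := by
          gcongr
          · exact rpow_nonneg hl.1.le _
          · exact hgC l hl.1
      _ = C * l ^ (N - s - 1 : ℝ) := by
          rw [show (N - s - 1 : ℝ) = -s - 1 + N by ring, rpow_add hl.1, rpow_natCast]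
          ring
  · refine ((integrableOn_Ioi_rpow_of_lt (a := -s - 1) (by linarith) one_pos).mul_const D).mono'
      hprod.restrict (ae_restrict_of_forall_mem measurableSet_Ioi fun l hl => ?_)
    have hl0 : 0 < l := one_pos.trans hl
    rw [norm_of_nonneg (mul_nonneg (rpow_nonneg hl0.le _) (hg0 l hl0))]
    gcongr
    exact hgD l hl0

end RadialCutoff

section FracLaplacianSchwartz

variable {V E : Type*} [NormedAddCommGroup V] [InnerProductSpace ℝ V]
  [NormedAddCommGroup E] [NormedSpace ℂ E] {s : ℝ} {m : ℕ}

variable (V) in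
lemma contDiff_radialCutoff_norm :
    ContDiff ℝ (⊤ : ℕ∞) fun ξ : V => (radialCutoff ‖ξ‖ : ℂ) :=
  Complex.ofRealCLM.contDiff.comp
    (smoothTransition.contDiff.comp (contDiff_const.sub (contDiff_norm_sq ℝ)))

variable [FiniteDimensional ℝ V]

variable (V) in
lemma hasCompactSupport_radialCutoff_norm :
    HasCompactSupport fun ξ : V => (radialCutoff ‖ξ‖ : ℂ) :=
  .intro (isCompact_closedBall 0 2) fun ξ hξ => by
    rw [mem_closedBall_zero_iff, not_le] at hξ
    rw [radialCutoff_of_two_le hξ.le, Complex.ofReal_zero]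

variable (V) in
/-- The function `ξ ↦ radialCutoff ‖ξ‖` as a Schwartz function. -/
noncomputable def schwartzRadialCutoff : 𝓢(V, ℂ) :=
  (hasCompactSupport_radialCutoff_norm V).toSchwartzMap (contDiff_radialCutoff_norm V)

lemma schwartzNormSqPow_schwartzRadialCutoff_apply (m : ℕ) {l : ℝ} (hl : 0 ≤ l) (ξ : V) :
    schwartzNormSqPow m (schwartzRadialCutoff V) (l • ξ) =
      (((l * ‖ξ‖) ^ 2) ^ m * radialCutoff (l * ‖ξ‖) : ℝ) := by
  have hcutoff : schwartzRadialCutoff V (l • ξ) = radialCutoff ‖l • ξ‖ := rfl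
  rw [schwartzNormSqPow_apply, hcutoff, norm_smul, norm_of_nonneg hl, Complex.ofReal_mul,
    Complex.real_smul]

variable [MeasurableSpace V] [BorelSpace V]

lemma fourierL1_schwartzNormSqPow_comp_smul_smul_le [CompleteSpace E] (A : 𝓢(V, ℂ)) (B : 𝓢(V, E))
    (m : ℕ) {l : ℝ} (hl : 0 < l) :
    fourierL1 (fun ξ => schwartzNormSqPow m A (l • ξ) • B ξ) ≤
      fourierL1 A * fourierL1 (schwartzNormSqPow m B) * l ^ (2 * m) := by
  have hshift (ξ : V) : schwartzNormSqPow m A (l • ξ) • B ξ =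
      l ^ (2 * m) • A (l • ξ) • schwartzNormSqPow m B ξ := by
    rw [schwartzNormSqPow_apply, schwartzNormSqPow_apply, norm_smul, norm_of_nonneg hl.le, mul_pow,
      mul_pow, ← pow_mul, mul_smul, smul_assoc, smul_assoc, smul_comm (A (l • ξ)) _ (B ξ)]
  simp only [hshift]
  rw [fourierL1_const_smul (by positivity), mul_comm]
  gcongr
  exact fourierL1_comp_smul_smul_le A _ hl

lemma stronglyMeasurable_fourierInv_comp_smul_smul (A : 𝓢(V, ℂ)) (B : 𝓢(V, E)) :
    StronglyMeasurable fun p : V × ℝ => 𝓕⁻ (fun ξ => A (p.2 • ξ) • B ξ) p.1 := by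
  have hcont : Continuous (Function.uncurry fun (p : V × ℝ) (ξ : V) =>
      𝐞 (inner ℝ ξ p.1) • A (p.2 • ξ) • B ξ) := by
    have := continuous_fourierChar
    fun_prop
  simp only [fourierInv_eq]
  exact hcont.stronglyMeasurable.integral_prod_right

lemma integrable_prod_rpow_smul_fourierInv [CompleteSpace E] (hs : 0 < s) (hm : s < 2 * m)
    (A : 𝓢(V, ℂ)) (B : 𝓢(V, E)) :
    Integrable
      (fun p : V × ℝ => p.2 ^ (-s - 1) •
        𝓕⁻ (fun ξ => schwartzNormSqPow m A (p.2 • ξ) • B ξ) p.1)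
      (volume.prod (volume.restrict (Ioi 0))) := by
  have hF := stronglyMeasurable_fourierInv_comp_smul_smul (schwartzNormSqPow m A) B
  have hmeas : Measurable fun p : V × ℝ => p.2 ^ (-s - 1) := by fun_prop
  refine (integrable_prod_iff' ?_).2 ⟨?_, ?_⟩
  · exact hmeas.aestronglyMeasurable.smul hF.aestronglyMeasurable
  · filter_upwards [ae_restrict_mem measurableSet_Ioi] with l hl
    exact (integrable_fourierInv_comp_smul_smul (schwartzNormSqPow m A) B hl).smul (l ^ (-s - 1))
  · refine IntegrableOn.congr_fun (f := fun l => l ^ (-s - 1) *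
      fourierL1 fun ξ => schwartzNormSqPow m A (l • ξ) • B ξ) ?_ (fun l hl => ?_) measurableSet_Ioi
    · refine integrableOn_rpow_mul_of_le hs (mod_cast hm) ?_ (fun l _ => fourierL1_nonneg _)
        (fun l hl => fourierL1_schwartzNormSqPow_comp_smul_smul_le A B m hl)
        fun l hl => fourierL1_comp_smul_smul_le (schwartzNormSqPow m A) B hl
      exact (hF.comp_measurable measurable_swap).norm.integral_prod_right.aestronglyMeasurable
    · have hl : 0 < l := hl
      simp only [norm_smul, norm_of_nonneg (rpow_nonneg hl.le _), integral_const_mul, fourierL1]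

lemma integrable_prod_rpow_mul_pow_mul_radialCutoff_smul [Nontrivial V] (hm : s < 2 * m)
    {h : V → E} (hh : AEStronglyMeasurable h) (hsh : Integrable fun ξ => ‖ξ‖ ^ s • h ξ) :
    Integrable
      (fun p : V × ℝ => (p.2 ^ (-s - 1) * ((p.2 * ‖p.1‖) ^ 2) ^ m * radialCutoff (p.2 * ‖p.1‖)) •
        h p.1)
      (volume.prod (volume.restrict (Ioi 0))) := by
  have hmeas : Measurable fun p : V × ℝ =>
      p.2 ^ (-s - 1) * ((p.2 * ‖p.1‖) ^ 2) ^ m * radialCutoff (p.2 * ‖p.1‖) := by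
    have := continuous_radialCutoff.measurable
    fun_prop
  refine (integrable_prod_iff ?_).2 ⟨?_, ?_⟩
  · exact hmeas.aestronglyMeasurable.smul hh.comp_fst
  · filter_upwards [ae_norm_pos] with ξ hξ
    exact (integrableOn_rpow_mul_pow_mul_radialCutoff hm hξ).smul_const _
  · refine (hsh.norm.const_mul (∫ l in Ioi (0 : ℝ), l ^ (2 * m - s - 1) * radialCutoff l)).congr ?_
    filter_upwards [ae_norm_pos] with ξ hξ
    rw [norm_smul, norm_of_nonneg (by positivity), ← mul_assoc,
      ← integral_rpow_mul_pow_mul_radialCutoff s m hξ, ← integral_mul_const]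
    refine setIntegral_congr_fun measurableSet_Ioi fun l hl => ?_
    have hl : 0 < l := hl
    have := radialCutoff_nonneg (l * ‖ξ‖)
    rw [norm_smul, norm_of_nonneg (by positivity)]

lemma integral_rpow_smul_fourierInv_schwartzRadialCutoff [Nontrivial V] [CompleteSpace E]
    (hm : s < 2 * m) {B : V → E} (hB : AEStronglyMeasurable B)
    (hsB : Integrable fun ξ => ‖ξ‖ ^ s • B ξ) (x : V) :
    ∫ l in Ioi (0 : ℝ), l ^ (-s - 1) •
        𝓕⁻ (fun ξ => schwartzNormSqPow m (schwartzRadialCutoff V) (l • ξ) • B ξ) x =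
      (∫ l in Ioi (0 : ℝ), l ^ (2 * m - s - 1) * radialCutoff l) •
        𝓕⁻ (fun ξ => ‖ξ‖ ^ s • B ξ) x := by
  have hchar : Continuous fun ξ : V => 𝐞 (inner ℝ ξ x) :=
    continuous_fourierChar.comp (by fun_prop)
  have hsmul : Integrable fun ξ => ‖ξ‖ ^ s • 𝐞 (inner ℝ ξ x) • B ξ := by
    simp only [smul_comm (‖_‖ ^ s) (𝐞 _)]
    exact hsB.mono (hchar.aestronglyMeasurable.smul hsB.aestronglyMeasurable)
      (.of_forall fun ξ => (Circle.norm_smul _ _).le)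
  have hprod := integrable_prod_rpow_mul_pow_mul_radialCutoff_smul hm
    (h := fun ξ => 𝐞 (inner ℝ ξ x) • B ξ) (hchar.aestronglyMeasurable.smul hB) hsmul
  calc ∫ l in Ioi (0 : ℝ), l ^ (-s - 1) •
        𝓕⁻ (fun ξ => schwartzNormSqPow m (schwartzRadialCutoff V) (l • ξ) • B ξ) x
      = ∫ l in Ioi (0 : ℝ), ∫ ξ, (l ^ (-s - 1) * ((l * ‖ξ‖) ^ 2) ^ m * radialCutoff (l * ‖ξ‖)) •
          𝐞 (inner ℝ ξ x) • B ξ := by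
        refine setIntegral_congr_fun measurableSet_Ioi fun l hl => ?_
        have hl : 0 < l := hl
        simp only [fourierInv_eq, ← integral_smul,
          schwartzNormSqPow_schwartzRadialCutoff_apply m hl.le, Complex.coe_smul,
          smul_comm (𝐞 _) _ (B _), smul_smul, mul_assoc]
    _ = ∫ ξ, (∫ l in Ioi (0 : ℝ), l ^ (-s - 1) * ((l * ‖ξ‖) ^ 2) ^ m * radialCutoff (l * ‖ξ‖)) •
          𝐞 (inner ℝ ξ x) • B ξ := by
        rw [← integral_integral_swap hprod]
        exact integral_congr_ae (.of_forall fun ξ => integral_smul_const _ _)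
    _ = _ := by
        rw [fourierInv_eq, ← integral_smul]
        refine integral_congr_ae ?_
        filter_upwards [ae_norm_pos] with ξ hξ
        rw [integral_rpow_mul_pow_mul_radialCutoff s m hξ, mul_smul, smul_comm (‖ξ‖ ^ s)]

lemma integrable_rpow_norm_smul (hs : 0 ≤ s) (φ : 𝓢(V, E)) :
    Integrable fun ξ => ‖ξ‖ ^ s • φ ξ := by
  obtain ⟨N, hN⟩ := exists_nat_ge s
  have hmeas : Measurable fun ξ : V => ‖ξ‖ ^ s := by fun_prop
  refine (φ.integrable.norm.add (φ.integrable_pow_mul volume N)).mono'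
    (hmeas.aestronglyMeasurable.smul φ.continuous.aestronglyMeasurable) (.of_forall fun ξ => ?_)
  have hle : ‖ξ‖ ^ s ≤ 1 + ‖ξ‖ ^ N := by
    rcases le_total ‖ξ‖ 1 with h | h
    · exact (rpow_le_one (norm_nonneg ξ) h hs).trans (le_add_of_nonneg_right (by positivity))
    · rw [← rpow_natCast]
      exact (rpow_le_rpow_of_exponent_le h hN).trans (le_add_of_nonneg_left zero_le_one)
  rw [norm_smul, norm_of_nonneg (by positivity), Pi.add_apply, ← one_add_mul]
  gcongr

theorem integrable_fourierInv_rpow_norm_smul [Nontrivial V] [CompleteSpace E] (hs : 0 < s)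
    (φ : 𝓢(V, E)) : Integrable (𝓕⁻ fun ξ => ‖ξ‖ ^ s • φ ξ) := by
  obtain ⟨m, hm⟩ := exists_nat_gt (s / 2)
  rw [div_lt_iff₀' two_pos] at hm
  have hc := integral_rpow_mul_radialCutoff_pos (p := 2 * m - s - 1) (by linarith)
  rw [← integrable_smul_iff hc.ne']
  exact (integrable_prod_rpow_smul_fourierInv hs hm (schwartzRadialCutoff V)
    φ).integral_prod_left.congr (.of_forall fun x =>
      integral_rpow_smul_fourierInv_schwartzRadialCutoff hm φ.continuous.aestronglyMeasurable
        (integrable_rpow_norm_smul hs.le φ) x)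

end FracLaplacianSchwartz

section Eigenfunction

variable {V E : Type*} [NormedAddCommGroup V] [InnerProductSpace ℝ V]

/-- The function `C_k^{(α)}((1 - ‖x‖²) / (1 + ‖x‖²)) (1 + ‖x‖²)^{-(d - s)/2}` on a space of
dimension `d`, with `α = (d - 1) / 2`: a zonal spherical harmonic, pulled back by stereographic
projection and multiplied by the conformal weight. -/
noncomputable def gegenbauerEigenfunction (s : ℝ) (k : ℕ) (x : V) : ℝ :=
  (gegenbauer ((Module.finrank ℝ V - 1) / 2) k).eval ((1 - ‖x‖ ^ 2) / (1 + ‖x‖ ^ 2)) *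
    (1 + ‖x‖ ^ 2) ^ (-((Module.finrank ℝ V - s) / 2))

lemma gegenbauerEigenfunction_eq_rationalWeight (s : ℝ) (k : ℕ) (x : V) :
    gegenbauerEigenfunction s k x = rationalWeight ((Module.finrank ℝ V - s) / 2)
      (shiftedGegenbauer ((Module.finrank ℝ V - 1) / 2) k) x := by
  have harg : (1 - ‖x‖ ^ 2) / (1 + ‖x‖ ^ 2) = 2 * (1 + ‖x‖ ^ 2)⁻¹ - 1 := by
    field_simp
    ring
  rw [gegenbauerEigenfunction, rationalWeight, shiftedGegenbauer, harg, mul_comm]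
  simp only [eval_comp, eval_sub, eval_mul, eval_ofNat, eval_X, eval_one]

lemma gegenbauerEigenfunction_mul_rpow_neg (s : ℝ) (k : ℕ) (x : V) :
    gegenbauerEigenfunction s k x * (1 + ‖x‖ ^ 2) ^ (-s) =
      rationalWeight ((Module.finrank ℝ V + s) / 2)
        (shiftedGegenbauer ((Module.finrank ℝ V - 1) / 2) k) x := by
  rw [gegenbauerEigenfunction_eq_rationalWeight, rationalWeight, rationalWeight, mul_right_comm,
    ← rpow_add (by positivity)]
  ring_nf

variable [FiniteDimensional ℝ V] [MeasurableSpace V] [BorelSpace V] [NormedAddCommGroup E]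
  [NormedSpace ℂ E] {s : ℝ}

lemma integrable_two_pi_mul_norm_rpow_smul (hs : 0 ≤ s) (φ : 𝓢(V, E)) :
    Integrable fun ξ => (2 * π * ‖ξ‖) ^ s • φ ξ := by
  simp only [mul_rpow two_pi_pos.le (norm_nonneg _), mul_smul]
  exact (integrable_rpow_norm_smul hs φ).smul _

theorem integrable_fracLaplacian_schwartz [Nontrivial V] [CompleteSpace E] (hs : 0 < s)
    (φ : 𝓢(V, E)) : Integrable (fracLaplacian s φ) := by
  have hconst : fracLaplacian s φ = (2 * π) ^ s • 𝓕⁻ fun ξ => ‖ξ‖ ^ s • 𝓕 φ ξ := by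
    ext x
    simp only [fracLaplacian, Pi.smul_apply, fourierInv_eq, ← integral_smul, fourier_coe,
      mul_rpow two_pi_pos.le (norm_nonneg _), mul_smul, smul_comm ((2 * π) ^ s)]
  rw [hconst]
  exact (integrable_fourierInv_rpow_norm_smul hs (𝓕 φ)).smul _

theorem fractional_laplacian_eigenfunctions_general [CompleteSpace E] (k : ℕ)
    (hs : s ∈ Ioo 0 (Module.finrank ℝ V : ℝ)) (φ : 𝓢(V, E)) :
    Integrable (fun x => gegenbauerEigenfunction s k x • fracLaplacian s φ x) ∧
      Integrable (fun x => (gegenbauerEigenfunction s k x * (1 + ‖x‖ ^ 2) ^ (-s)) • φ x) ∧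
      ∫ x, gegenbauerEigenfunction s k x • fracLaplacian s φ x =
        fracLaplacianEigenvalue (Module.finrank ℝ V) s k •
          ∫ x, (gegenbauerEigenfunction s k x * (1 + ‖x‖ ^ 2) ^ (-s)) • φ x := by
  have : Nontrivial V := Module.finrank_pos_iff.1 (Nat.cast_pos.1 (hs.1.trans hs.2))
  have hlap := integrable_fracLaplacian_schwartz hs.1 φ
  simp only [gegenbauerEigenfunction_mul_rpow_neg]
  simp only [gegenbauerEigenfunction_eq_rationalWeight]
  refine ⟨integrable_rationalWeight_smul (by linarith [hs.2]) _ hlap,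
    integrable_rationalWeight_smul (by linarith [hs.1, hs.2]) _ φ.integrable,
    integral_rationalWeight_smul_fracLaplacian hs k φ.continuous φ.integrable ?_ ?_ hlap⟩
  · rw [← fourier_coe]
    exact (𝓕 φ).integrable
  · rw [← fourier_coe]
    exact integrable_two_pi_mul_norm_rpow_smul hs.1.le (𝓕 φ)

lemma eigenFun_eq_gegenbauerEigenfunction {n : ℕ} (hn : 2 ≤ n) (k : ℕ) (s : ℝ)
    (x : EuclideanSpace ℝ (Fin n)) : eigenFun n k s x = gegenbauerEigenfunction s k x := by
  rw [eigenFun, gegenbauerEigenfunction, finrank_euclideanSpace_fin,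
    gegenbauerP_eq_eval_gegenbauer hn]

end Eigenfunction

/-- Eigenfunctions of the fractional Laplacian on `ℝⁿ` (Proposition A.1, weak
Fourier formulation). -/
theorem fractional_laplacian_eigenfunctions (n k : ℕ) (hn : 2 ≤ n) (s lamk : ℝ)
    (hs : s ∈ Set.Ioo (0 : ℝ) (n : ℝ))
    (hlamk : lamk = 2 ^ s * Gamma ((k : ℝ) + ((n : ℝ) + s) / 2) /
      Gamma ((k : ℝ) + ((n : ℝ) - s) / 2)) :
    ∀ φ : SchwartzMap (EuclideanSpace ℝ (Fin n)) ℂ,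
      Integrable (fun x : EuclideanSpace ℝ (Fin n) =>
        (eigenFun n k s x : ℂ) *
          𝓕⁻ (fun ξ : EuclideanSpace ℝ (Fin n) =>
            (((2 * π * ‖ξ‖) ^ s : ℝ) : ℂ) * 𝓕 (⇑φ) ξ) x) volume ∧
      Integrable (fun x : EuclideanSpace ℝ (Fin n) =>
        (eigenFun n k s x : ℂ) * (((1 + ‖x‖ ^ 2) ^ (-s) : ℝ) : ℂ) * φ x) volume ∧
      ∫ x : EuclideanSpace ℝ (Fin n),
          (eigenFun n k s x : ℂ) *
            𝓕⁻ (fun ξ : EuclideanSpace ℝ (Fin n) =>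
              (((2 * π * ‖ξ‖) ^ s : ℝ) : ℂ) * 𝓕 (⇑φ) ξ) x
        = (lamk : ℂ) *
          ∫ x : EuclideanSpace ℝ (Fin n),
            (eigenFun n k s x : ℂ) * (((1 + ‖x‖ ^ 2) ^ (-s) : ℝ) : ℂ) * φ x := by
  intro φ
  have hfinrank : (Module.finrank ℝ (EuclideanSpace ℝ (Fin n)) : ℝ) = n := by
    rw [finrank_euclideanSpace_fin]
  have hgeneral := fractional_laplacian_eigenfunctions_general k (hfinrank ▸ hs) φ
  simpa only [← eigenFun_eq_gegenbauerEigenfunction hn, fracLaplacian, fracLaplacianEigenvalue,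
    hfinrank, ← hlamk, ← Complex.coe_smul, smul_eq_mul, Complex.ofReal_mul] using hgeneral
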